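/- For every γ ∈ (1,2) and every k ∈ ℤ, (1/(2π)) · ∫_{−π}^{π} (1 + (γ/24)(2 − 2 cos θ)) · (2 − 2 cos θ)^{γ/2} · cos(kθ) dθ = s_k^{(γ)}, i.e. the s_k^{(γ)} are exactly the Fourier coefficients of the generating function S_γ(θ) = (1 + (γ/24)(2 − 2 cos θ))(2 − 2 cos θ)^{γ/2}. -/

import Mathlib

open Real

/-- The fourth-order coefficients `s_k^{(γ)}`. -/
noncomputable def sCoef (γ : ℝ) (k : ℤ) : ℝ :=
  ((-1 : ℝ) ^ k * Real.Gamma (γ + 1) /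
      (Real.Gamma (γ / 2 - k + 1) * Real.Gamma (γ / 2 + k + 1))) *
    (1 + γ * (γ + 1) * (γ + 2) / (6 * (γ - 2 * k + 2) * (γ + 2 * k + 2)))

/-!
With `θ = 2t` the symbol `2 - 2 cos θ` is `(2 sin t)²`, so by periodicity everything reduces to the
integrals `I_s(μ) = ∫₀^π sin^s t · cos (μt) dt`. Integrating the derivative of
`2 sin^{s+1} t · cos (μt)`, which vanishes at both ends, gives
`(s + 1 + μ) I_s(μ + 1) + (s + 1 - μ) I_s(μ - 1) = 0`, the recursion in `k` satisfied by
`(-1)^k Γ(s + 1) / (Γ(s/2 - k + 1) Γ(s/2 + k + 1))`; the initial value `I_s(0)` is a Beta integral.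
The coefficient `s_k` is the combination of these values at `s = γ` and `s = γ + 2`.
-/

/-- The Fourier coefficient `g_k^{(s)}` of the symbol `(2 - 2 cos θ)^{s/2}` in closed form: the
`k`-th weight of the fractional centered difference of order `s`. Since `Real.Gamma` is `0` at the
poles of `Γ`, the quotient uses the entire function `1 / Γ` there. -/
noncomputable def centeredDiffCoef (s : ℝ) (k : ℤ) : ℝ :=
  (-1 : ℝ) ^ k * Real.Gamma (s + 1) / (Real.Gamma (s / 2 - k + 1) * Real.Gamma (s / 2 + k + 1))

section Coefficients

lemma inv_Gamma_eq_self_mul_inv_Gamma_add_one (x : ℝ) :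
    (Real.Gamma x)⁻¹ = x * (Real.Gamma (x + 1))⁻¹ := by
  rcases eq_or_ne x 0 with rfl | hx
  · simp [Real.Gamma_zero]
  · rw [Real.Gamma_add_one hx, mul_inv, mul_inv_cancel_left₀ hx]

lemma centeredDiffCoef_zero_right (s : ℝ) :
    centeredDiffCoef s 0 = Real.Gamma (s + 1) / Real.Gamma (s / 2 + 1) ^ 2 := by
  simp [centeredDiffCoef, sq]

lemma centeredDiffCoef_neg (s : ℝ) (k : ℤ) : centeredDiffCoef s (-k) = centeredDiffCoef s k := by
  have hsign : (-1 : ℝ) ^ (-k) = (-1) ^ k := by rw [zpow_neg, ← inv_zpow, inv_neg_one]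
  simp only [centeredDiffCoef, hsign, Int.cast_neg, sub_neg_eq_add, ← sub_eq_add_neg]
  rw [mul_comm (Real.Gamma (s / 2 + k + 1))]

lemma centeredDiffCoef_add_one (s : ℝ) (k : ℤ) :
    (s / 2 + k + 1) * centeredDiffCoef s (k + 1) = -(s / 2 - k) * centeredDiffCoef s k := by
  have hleft := inv_Gamma_eq_self_mul_inv_Gamma_add_one (s / 2 - k)
  have hright := inv_Gamma_eq_self_mul_inv_Gamma_add_one (s / 2 + k + 1)
  have hsub : s / 2 - ((k : ℝ) + 1) + 1 = s / 2 - k := by ring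
  have hadd : s / 2 + ((k : ℝ) + 1) + 1 = s / 2 + k + 1 + 1 := by ring
  have hsign : (-1 : ℝ) ^ (k + 1) = -(-1) ^ k := by rw [zpow_add_one₀ (by norm_num), mul_neg_one]
  rw [centeredDiffCoef, centeredDiffCoef, Int.cast_add, Int.cast_one, hsub, hadd, hsign,
    div_eq_mul_inv (_ * _), div_eq_mul_inv (_ * _), mul_inv, mul_inv, hleft, hright]
  ring

lemma centeredDiffCoef_add_two {s : ℝ} {k : ℤ} (hs : -1 < s) (hsub : s / 2 - k + 1 ≠ 0)
    (hadd : s / 2 + k + 1 ≠ 0) :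
    centeredDiffCoef (s + 2) k =
      (s + 1) * (s + 2) / ((s / 2 - k + 1) * (s / 2 + k + 1)) * centeredDiffCoef s k := by
  have hnum : Real.Gamma (s + 2 + 1) = (s + 2) * ((s + 1) * Real.Gamma (s + 1)) := by
    have htwo : s + 2 = s + 1 + 1 := by ring
    rw [htwo, Real.Gamma_add_one (s := s + 1 + 1) (by linarith),
      Real.Gamma_add_one (s := s + 1) (by linarith)]
  have hsub' : (s + 2) / 2 - k + 1 = s / 2 - k + 1 + 1 := by ring
  have hadd' : (s + 2) / 2 + k + 1 = s / 2 + k + 1 + 1 := by ring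
  rw [centeredDiffCoef, centeredDiffCoef, hnum, hsub', hadd', Real.Gamma_add_one hsub,
    Real.Gamma_add_one hadd]
  field_simp

lemma sCoef_eq_centeredDiffCoef_add {γ : ℝ} {k : ℤ} (hγ : -1 < γ) (hsub : γ / 2 - k + 1 ≠ 0)
    (hadd : γ / 2 + k + 1 ≠ 0) :
    sCoef γ k = centeredDiffCoef γ k + γ / 24 * centeredDiffCoef (γ + 2) k := by
  have hsub' : γ - 2 * k + 2 = 2 * (γ / 2 - k + 1) := by ring
  have hadd' : γ + 2 * k + 2 = 2 * (γ / 2 + k + 1) := by ring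
  rw [centeredDiffCoef_add_two hγ hsub hadd, sCoef, ← centeredDiffCoef, hsub', hadd']
  field_simp
  ring

end Coefficients

section SineIntegrals

lemma integral_rpow_mul_one_sub_rpow {u v : ℝ} (hu : 0 < u) (hv : 0 < v) :
    ∫ x in (0 : ℝ)..1, x ^ (u - 1) * (1 - x) ^ (v - 1) = ProbabilityTheory.beta u v := by
  have hcast : Complex.betaIntegral u v =
      ((∫ x in (0 : ℝ)..1, x ^ (u - 1) * (1 - x) ^ (v - 1) : ℝ) : ℂ) := by
    rw [Complex.betaIntegral, ← intervalIntegral.integral_ofReal]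
    refine intervalIntegral.integral_congr fun x hx => ?_
    rw [Set.uIcc_of_le zero_le_one] at hx
    simp [Complex.ofReal_cpow hx.1, Complex.ofReal_cpow (sub_nonneg.mpr hx.2)]
  rw [ProbabilityTheory.beta_eq_betaIntegralReal u v hu hv, hcast, Complex.ofReal_re]

lemma integral_sin_rpow {s : ℝ} (hs : -1 < s) :
    ∫ t in (0 : ℝ)..π, sin t ^ s = 2 ^ s * ProbabilityTheory.beta ((s + 1) / 2) ((s + 1) / 2) := by
  -- Substitute `x = (1 - cos t) / 2`, for which `x * (1 - x) = (sin t / 2) ^ 2`.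
  have hsubst := intervalIntegral.integral_comp_mul_deriv_of_deriv_nonneg (a := 0) (b := π)
    (f := fun t => (1 - cos t) / 2) (f' := fun t => sin t / 2)
    (g := fun x : ℝ => x ^ ((s + 1) / 2 - 1) * (1 - x) ^ ((s + 1) / 2 - 1))
    (by fun_prop)
    (fun t _ => by simpa using ((hasDerivAt_cos t).const_sub 1).div_const 2)
    (fun t ht => by
      rw [min_eq_left pi_pos.le, max_eq_right pi_pos.le] at ht
      exact (half_pos (sin_pos_of_mem_Ioo ht)).le)
  have hends : (1 - cos 0) / 2 = 0 ∧ (1 - cos π) / 2 = 1 := by norm_num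
  rw [hends.1, hends.2, integral_rpow_mul_one_sub_rpow (by linarith) (by linarith)] at hsubst
  rw [← hsubst, ← intervalIntegral.integral_const_mul]
  refine intervalIntegral.integral_congr_Ioo_of_le pi_pos.le fun t ht => ?_
  have hsin : 0 < sin t / 2 := half_pos (sin_pos_of_mem_Ioo ht)
  have hprod : (1 - cos t) / 2 * (1 - (1 - cos t) / 2) = (sin t / 2) ^ 2 := by
    rw [div_pow, sin_sq]; ring
  have hpow : ((sin t / 2) ^ 2) ^ ((s + 1) / 2 - 1) = (sin t / 2) ^ (s - 1) := by
    rw [← rpow_natCast, ← rpow_mul hsin.le]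
    congr 1
    push_cast
    ring
  have hle : 0 ≤ (1 - cos t) / 2 := by linarith [cos_le_one t]
  have hle' : 0 ≤ 1 - (1 - cos t) / 2 := by linarith [neg_one_le_cos t]
  simp only [Function.comp_apply]
  rw [← mul_rpow hle hle', hprod, hpow, ← rpow_add_one hsin.ne', sub_add_cancel,
    ← mul_rpow zero_le_two hsin.le, mul_div_cancel₀ _ two_ne_zero]

lemma two_rpow_mul_integral_sin_rpow {s : ℝ} (hs : -1 < s) :
    2 ^ s * ∫ t in (0 : ℝ)..π, sin t ^ s = π * centeredDiffCoef s 0 := by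
  have hdup : Real.Gamma ((s + 1) / 2) * Real.Gamma (s / 2 + 1) =
      Real.Gamma (s + 1) * (2 ^ s)⁻¹ * √π := by
    have h := Real.Gamma_mul_Gamma_add_half ((s + 1) / 2)
    rw [← rpow_neg zero_le_two]
    convert h using 3 <;> ring_nf
  have hpos : 0 < Real.Gamma (s / 2 + 1) := Real.Gamma_pos_of_pos (by linarith)
  have hpos' : 0 < Real.Gamma (s + 1) := Real.Gamma_pos_of_pos (by linarith)
  rw [integral_sin_rpow hs, centeredDiffCoef_zero_right, ProbabilityTheory.beta, add_halves,
    eq_div_of_mul_eq hpos.ne' hdup]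
  field_simp
  rw [sq_sqrt pi_pos.le]

lemma intervalIntegrable_sin_rpow {s : ℝ} (hs : -1 < s) :
    IntervalIntegrable (fun t => sin t ^ s) MeasureTheory.volume 0 π := by
  have hbeta := ProbabilityTheory.beta_pos (α := (s + 1) / 2) (β := (s + 1) / 2)
    (by linarith) (by linarith)
  refine intervalIntegral.intervalIntegrable_of_integral_ne_zero ?_
  rw [integral_sin_rpow hs]
  positivity

lemma hasDerivAt_sin_rpow_mul_cos (s μ : ℝ) {t : ℝ} (ht : 0 < sin t) :
    HasDerivAt (fun t => 2 * (sin t ^ (s + 1) * cos (μ * t)))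
      ((s + 1 + μ) * (sin t ^ s * cos ((μ + 1) * t)) +
        (s + 1 - μ) * (sin t ^ s * cos ((μ - 1) * t))) t := by
  have hsin : HasDerivAt (fun t => sin t ^ (s + 1)) (cos t * (s + 1) * sin t ^ s) t := by
    simpa using (hasDerivAt_sin t).rpow_const (p := s + 1) (Or.inl ht.ne')
  have hcos : HasDerivAt (fun t => cos (μ * t)) (-sin (μ * t) * μ) t := by
    simpa using ((hasDerivAt_id t).const_mul μ).cos
  refine ((hsin.mul hcos).const_mul 2).congr_deriv ?_
  rw [rpow_add_one ht.ne', add_mul μ, sub_mul μ, one_mul, cos_add, cos_sub]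
  ring

lemma integral_sin_rpow_mul_cos_rec {s : ℝ} (hs : -1 < s) (μ : ℝ) :
    (s + 1 + μ) * ∫ t in (0 : ℝ)..π, sin t ^ s * cos ((μ + 1) * t) =
      -((s + 1 - μ) * ∫ t in (0 : ℝ)..π, sin t ^ s * cos ((μ - 1) * t)) := by
  have hint (c ν : ℝ) : IntervalIntegrable (fun t => c * (sin t ^ s * cos (ν * t)))
      MeasureTheory.volume 0 π :=
    ((intervalIntegrable_sin_rpow hs).mul_continuousOn (by fun_prop)).const_mul c
  have hcont : Continuous fun t => 2 * (sin t ^ (s + 1) * cos (μ * t)) :=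
    ((continuous_sin.rpow_const fun _ => Or.inr (by linarith)).mul (by fun_prop)).const_mul 2
  have hftc := intervalIntegral.integral_eq_sub_of_hasDerivAt_of_le pi_pos.le hcont.continuousOn
    (fun t ht => hasDerivAt_sin_rpow_mul_cos s μ (sin_pos_of_mem_Ioo ht))
    ((hint _ _).add (hint _ _))
  rw [intervalIntegral.integral_add (hint _ _) (hint _ _), intervalIntegral.integral_const_mul,
    intervalIntegral.integral_const_mul, sin_zero, sin_pi, zero_rpow (by linarith)] at hftc
  linarith

lemma two_rpow_mul_integral_sin_rpow_mul_cos_nat {s : ℝ} (hs : -1 < s) (n : ℕ) :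
    2 ^ s * ∫ t in (0 : ℝ)..π, sin t ^ s * cos (2 * n * t) = π * centeredDiffCoef s n := by
  induction n with
  | zero => simpa using two_rpow_mul_integral_sin_rpow hs
  | succ n ih =>
    have hne : s / 2 + n + 1 ≠ 0 := by
      have : (0 : ℝ) ≤ n := n.cast_nonneg
      linarith
    have hint := integral_sin_rpow_mul_cos_rec hs (2 * n + 1)
    have hcoef := centeredDiffCoef_add_one s n
    have hup : (2 * n + 1 + 1 : ℝ) = 2 * (n + 1 : ℕ) := by push_cast; ring
    rw [hup, add_sub_cancel_right] at hint
    push_cast at hint hcoef ⊢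
    refine mul_left_cancel₀ hne ?_
    linear_combination 2 ^ s / 2 * hint - (s / 2 - n) * ih - π * hcoef

lemma two_rpow_mul_integral_sin_rpow_mul_cos {s : ℝ} (hs : -1 < s) (k : ℤ) :
    2 ^ s * ∫ t in (0 : ℝ)..π, sin t ^ s * cos (2 * k * t) = π * centeredDiffCoef s k := by
  obtain ⟨n, rfl | rfl⟩ := k.eq_nat_or_neg
  · exact_mod_cast two_rpow_mul_integral_sin_rpow_mul_cos_nat hs n
  · simpa [centeredDiffCoef_neg] using two_rpow_mul_integral_sin_rpow_mul_cos_nat hs n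

end SineIntegrals

section FourierCoefficients

lemma integral_neg_pi_pi_of_periodic {f : ℝ → ℝ} (hf : Function.Periodic f (2 * π)) :
    ∫ θ in (-π)..π, f θ = 2 * ∫ t in (0 : ℝ)..π, f (2 * t) := by
  have hshift := hf.intervalIntegral_add_eq (-π) 0
  have hend : -π + 2 * π = π := by ring
  rw [hend, zero_add] at hshift
  rw [hshift, intervalIntegral.integral_comp_mul_left f two_ne_zero, mul_zero, smul_eq_mul,
    mul_inv_cancel_left₀ two_ne_zero]

lemma two_sub_two_cos_two_mul_rpow {t : ℝ} (ht : 0 ≤ sin t) (s : ℝ) :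
    (2 - 2 * cos (2 * t)) ^ (s / 2) = 2 ^ s * sin t ^ s := by
  have hsq : 2 - 2 * cos (2 * t) = (2 * sin t) ^ (2 : ℝ) := by
    rw [rpow_two, cos_two_mul, mul_pow, sin_sq]
    ring
  rw [hsq, ← rpow_mul (by positivity), mul_div_cancel₀ s two_ne_zero, mul_rpow zero_le_two ht]

lemma integral_two_sub_two_cos_rpow_mul_cos {s : ℝ} (hs : -1 < s) (k : ℤ) :
    ∫ θ in (-π)..π, (2 - 2 * cos θ) ^ (s / 2) * cos (k * θ) = 2 * π * centeredDiffCoef s k := by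
  have hper : Function.Periodic (fun θ => (2 - 2 * cos θ) ^ (s / 2) * cos (k * θ)) (2 * π) :=
    fun θ => by simp only [cos_add_two_pi, mul_add, cos_add_int_mul_two_pi]
  have hhalf : ∫ t in (0 : ℝ)..π, (2 - 2 * cos (2 * t)) ^ (s / 2) * cos (k * (2 * t)) =
      2 ^ s * ∫ t in (0 : ℝ)..π, sin t ^ s * cos (2 * k * t) := by
    rw [← intervalIntegral.integral_const_mul]
    refine intervalIntegral.integral_congr fun t ht => ?_
    rw [Set.uIcc_of_le pi_pos.le] at ht
    simp only [two_sub_two_cos_two_mul_rpow (sin_nonneg_of_mem_Icc ht)]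
    ring_nf
  rw [integral_neg_pi_pi_of_periodic hper, hhalf, two_rpow_mul_integral_sin_rpow_mul_cos hs,
    mul_assoc]

lemma intervalIntegrable_two_sub_two_cos_rpow {s : ℝ} (hs : -1 < s) :
    IntervalIntegrable (fun θ => (2 - 2 * cos θ) ^ (s / 2)) MeasureTheory.volume (-π) π := by
  have hvalue := integral_two_sub_two_cos_rpow_mul_cos hs 0
  simp only [Int.cast_zero, zero_mul, cos_zero, mul_one, centeredDiffCoef_zero_right] at hvalue
  have hpos : 0 < Real.Gamma (s + 1) := Real.Gamma_pos_of_pos (by linarith)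
  have hpos' : 0 < Real.Gamma (s / 2 + 1) := Real.Gamma_pos_of_pos (by linarith)
  refine intervalIntegral.intervalIntegrable_of_integral_ne_zero ?_
  rw [hvalue]
  positivity

lemma integral_symbol_mul_cos {γ : ℝ} (hγ : -1 < γ) (k : ℤ) :
    ∫ θ in (-π)..π, (1 + γ / 24 * (2 - 2 * cos θ)) * (2 - 2 * cos θ) ^ (γ / 2) * cos (k * θ) =
      2 * π * (centeredDiffCoef γ k + γ / 24 * centeredDiffCoef (γ + 2) k) := by
  have hγ' : -1 < γ + 2 := by linarith
  have hint {s : ℝ} (hs : -1 < s) :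
      IntervalIntegrable (fun θ => (2 - 2 * cos θ) ^ (s / 2) * cos (k * θ))
        MeasureTheory.volume (-π) π :=
    (intervalIntegrable_two_sub_two_cos_rpow hs).mul_continuousOn (by fun_prop)
  have hsplit (θ : ℝ) :
      (1 + γ / 24 * (2 - 2 * cos θ)) * (2 - 2 * cos θ) ^ (γ / 2) * cos (k * θ) =
        (2 - 2 * cos θ) ^ (γ / 2) * cos (k * θ) +
          γ / 24 * ((2 - 2 * cos θ) ^ ((γ + 2) / 2) * cos (k * θ)) := by
    have hnonneg : 0 ≤ 2 - 2 * cos θ := by linarith [cos_le_one θ]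
    rw [add_div, div_self two_ne_zero, rpow_add_one' hnonneg (by linarith)]
    ring
  simp only [hsplit]
  rw [intervalIntegral.integral_add (hint hγ) ((hint hγ').const_mul _),
    intervalIntegral.integral_const_mul, integral_two_sub_two_cos_rpow_mul_cos hγ,
    integral_two_sub_two_cos_rpow_mul_cos hγ']
  ring

end FourierCoefficients

lemma half_add_intCast_add_one_ne_neg_natCast {γ : ℝ} (hγ : γ ∈ Set.Ioo (0 : ℝ) 2) (k : ℤ)
    (m : ℕ) : γ / 2 + k + 1 ≠ -m := by
  intro h
  have hcast : γ / 2 = ((-m - k - 1 : ℤ) : ℝ) := by push_cast; linarith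
  have hpos : (0 : ℝ) < ((-m - k - 1 : ℤ) : ℝ) := by linarith [hγ.1]
  have hlt : ((-m - k - 1 : ℤ) : ℝ) < 1 := by linarith [hγ.2]
  norm_cast at hpos hlt
  lia

theorem stmt_5_general {γ : ℝ} (hγ : -1 < γ) {k : ℤ} (hsub : ∀ m : ℕ, γ / 2 - k + 1 ≠ -m)
    (hadd : ∀ m : ℕ, γ / 2 + k + 1 ≠ -m) :
    (1 / (2 * π)) *
        ∫ θ in (-π)..π,
          (1 + γ / 24 * (2 - 2 * Real.cos θ)) * (2 - 2 * Real.cos θ) ^ (γ / 2) *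
            Real.cos ((k : ℝ) * θ)
      = sCoef γ k := by
  have hsub₀ : γ / 2 - k + 1 ≠ 0 := by simpa using hsub 0
  have hadd₀ : γ / 2 + k + 1 ≠ 0 := by simpa using hadd 0
  rw [integral_symbol_mul_cos hγ, sCoef_eq_centeredDiffCoef_add hγ hsub₀ hadd₀, ← mul_assoc,
    one_div_mul_cancel (by positivity), one_mul]

theorem stmt_5 (γ : ℝ) (hγ : γ ∈ Set.Ioo (1 : ℝ) 2) (k : ℤ) :
    (1 / (2 * π)) *
        ∫ θ in (-π)..π,
          (1 + γ / 24 * (2 - 2 * Real.cos θ)) * (2 - 2 * Real.cos θ) ^ (γ / 2) *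
            Real.cos ((k : ℝ) * θ)
      = sCoef γ k := by
  have hnopole := half_add_intCast_add_one_ne_neg_natCast (Set.Ioo_subset_Ioo_left zero_le_one hγ)
  exact stmt_5_general (by linarith [hγ.1]) (by simpa [sub_eq_add_neg] using hnopole (-k))
    (hnopole k)
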